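/- Let a fusion datum on a countable type I admit a sequence (F_n) of nonempty finite subsets of I such that |∂_γ F_n|_w / |F_n|_w → 0 as n → ∞ for every γ ∈ I. Let A be a nontrivial (1 ≠ 0) unital C*-algebra and let (T_α)_{α∈I} be a CFA-type action of the fusion datum on A. Then there exists a state ψ on A such that ψ(T_α(a)) = (d α)·ψ(a) for every α ∈ I and every a ∈ A (an FA-invariant state). -/

import Mathlib

open scoped BigOperators
open Filter
open scoped Classical

/-- A fusion datum on a type `I`: unit, structure constants, involution and a
dimension function satisfying the unit laws, Frobenius reciprocity and
multiplicativity of the dimension function. -/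
structure FusionDatum (I : Type*) where
  e : I
  N : I → I → I → ℕ
  conj : I → I
  d : I → ℝ
  conj_e : conj e = e
  conj_conj : ∀ α, conj (conj α) = α
  N_conj : ∀ α β γ, N α β γ = N (conj β) (conj α) (conj γ)
  one_le_d : ∀ α, 1 ≤ d α
  d_conj : ∀ α, d (conj α) = d α
  N_unit_left : ∀ α γ, N e α γ = if γ = α then 1 else 0
  N_unit_right : ∀ α γ, N α e γ = if γ = α then 1 else 0
  frobenius₁ : ∀ α β γ, N α β γ = N γ (conj β) α
  frobenius₂ : ∀ α β γ, N α β γ = N (conj α) γ β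
  mul_support_finite : ∀ α β, (Function.support fun γ => (N α β γ : ℝ) * d γ).Finite
  d_mul : ∀ α β, (∑ᶠ γ, (N α β γ : ℝ) * d γ) = d α * d β

/-- Weighted cardinality `|S|_w = Σ_{α∈S} (d α)²` of a set. -/
noncomputable def FusionDatum.wcard {I : Type*} (F : FusionDatum I) (S : Set I) : ℝ :=
  ∑ᶠ α ∈ S, F.d α ^ 2

/-- Right γ-boundary `∂_γ S`. -/
def FusionDatum.rBoundary {I : Type*} (F : FusionDatum I) (γ : I) (S : Set I) : Set I :=
  {α | (α ∈ S ∧ ∃ β ∉ S, 0 < F.N α γ β) ∨ (α ∉ S ∧ ∃ β ∈ S, 0 < F.N α γ β)}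

/-- Left γ-boundary `∂ᴸ_γ S`. -/
def FusionDatum.lBoundary {I : Type*} (F : FusionDatum I) (γ : I) (S : Set I) : Set I :=
  {α | (α ∈ S ∧ ∃ β ∉ S, 0 < F.N γ α β) ∨ (α ∉ S ∧ ∃ β ∈ S, 0 < F.N γ α β)}

/-- ℓ²-norm `(Σ_β |g β|²)^{1/2}` of a (finitely supported) function. -/
noncomputable def l2norm {I : Type*} (g : I → ℂ) : ℝ :=
  Real.sqrt (∑ᶠ β, ‖g β‖ ^ 2)

/-- The convolution operator `l_γ`. -/
noncomputable def FusionDatum.lconv {I : Type*} (F : FusionDatum I) (γ : I) (f : I → ℂ) :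
    I → ℂ :=
  fun β => (1 / (F.d γ : ℂ)) * ∑ᶠ η, (F.N γ η β : ℂ) * f η

/-- A state on a unital C*-algebra: a unital positive linear functional. -/
structure CStarState (A : Type*) [NormedRing A] [StarRing A] [NormedAlgebra ℂ A] where
  toFun : A →ₗ[ℂ] ℂ
  map_one : toFun 1 = 1
  pos : ∀ a : A, 0 ≤ (toFun (star a * a)).re ∧ (toFun (star a * a)).im = 0

/-- A CFA-type action of a fusion datum on a unital C*-algebra: `T α a` encodes `χ(α)·a`. -/
structure CFAAction {I : Type*} (F : FusionDatum I) (A : Type*)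
    [NormedRing A] [StarRing A] [NormedAlgebra ℂ A] where
  T : I → A →ₗ[ℂ] A
  map_star : ∀ α a, T α (star a) = star (T α a)
  norm_le : ∀ α a, ‖T α a‖ ≤ F.d α * ‖a‖
  map_one : ∀ α, T α 1 = (F.d α : ℂ) • (1 : A)
  comp_eq : ∀ α β a, T α (T β a) = ∑ᶠ γ, (F.N α β γ) • T γ a

/-- `⟨f|f⟩_A = Σ_α f α · (f α)*`. -/
noncomputable def innerA {I A : Type*} [NormedRing A] [StarRing A] (f : I → A) : A :=
  ∑ᶠ α, f α * star (f α)

/-- `‖f‖_{2,A} = ‖⟨f|f⟩_A‖^{1/2}`. -/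
noncomputable def norm2A {I A : Type*} [NormedRing A] [StarRing A] (f : I → A) : ℝ :=
  Real.sqrt ‖innerA f‖

/-- Twisted convolution `(δ_γ *_σ f)(β) = (1/(d γ))·Σ_η N γ η β · σ_γ(f η)`. -/
noncomputable def FusionDatum.tconv {I A : Type*} [NormedRing A] [NormedAlgebra ℂ A]
    (F : FusionDatum I) (σ : I → A → A) (γ : I) (f : I → A) : I → A :=
  fun β => (((F.d γ)⁻¹ : ℝ) : ℂ) • ∑ᶠ η, (F.N γ η β) • σ γ (f η)

/-- The ℂ-valued Følner vectors `ξ_F = |F|_w^{-1/2} Σ_{α∈F} d α · δ_α`. -/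
noncomputable def xiC {I : Type*} (F : FusionDatum I) (S : Finset I) : I → ℂ :=
  fun α => if α ∈ S then (((Real.sqrt (F.wcard (S : Set I)))⁻¹ * F.d α : ℝ) : ℂ) else 0

/-- The A-valued Følner vectors `ξ_F = |F|_w^{-1/2} Σ_{α∈F} d α · δ_α ⊗ 1_A`. -/
noncomputable def xiA {I : Type*} (F : FusionDatum I) (S : Finset I)
    (A : Type*) [NormedRing A] [NormedAlgebra ℂ A] : I → A :=
  fun α => if α ∈ S then (((Real.sqrt (F.wcard (S : Set I)))⁻¹ * F.d α : ℝ) : ℂ) • (1 : A)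
    else 0

/-!
Frobenius reciprocity makes `(∑_{α ∈ S} d_α α) · γ` agree with `d_γ ∑_{α ∈ S} d_α α` off the
boundary `∂ = ∂_{γ̄} S`: its coefficient at `β` is a partial sum of `∑_α N(β, γ̄, α) d_α = d_β d_γ`,
which is the full sum if `β ∈ S ∖ ∂` and vanishes if `β ∉ S ∪ ∂`. Hence the unital contractions
`M_S = |S|_w⁻¹ ∑_{α ∈ S} d_α T_α` satisfy
`‖M_S (T_γ a) - d_γ M_S a‖ ≤ d_γ ‖a‖ |∂|_w / |S|_w`. If `φ` is a contractive functional with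
`φ 1 = 1`, every weak-* cluster point of the functionals `φ ∘ M_S` along a Følner net is therefore
an invariant unital contraction, and unital contractive functionals on a C*-algebra are positive.
-/

section UnitalContractiveFunctional

open scoped ComplexOrder

theorem norm_add_mul_I_smul_one_sq_le {A : Type*} [NormedRing A] [StarRing A] [CStarRing A]
    [NormedAlgebra ℂ A] [StarModule ℂ A] {x : A} (hx : IsSelfAdjoint x) (t : ℝ) :
    ‖x + (t * Complex.I) • (1 : A)‖ ^ 2 ≤ ‖x‖ ^ 2 + t ^ 2 := by
  obtain _ | _ := subsingleton_or_nontrivial A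
  · simpa [Subsingleton.elim _ (0 : A)] using sq_nonneg t
  have hI : -((t : ℂ) * Complex.I) * (t * Complex.I) = ((t ^ 2 : ℝ) : ℂ) := by
    push_cast
    linear_combination (-(t : ℂ) ^ 2) * Complex.I_sq
  have hstar : star (x + (t * Complex.I) • (1 : A)) = x + (-(t * Complex.I)) • (1 : A) := by
    simp [hx.star_eq]
  have hmul : star (x + (t * Complex.I) • (1 : A)) * (x + (t * Complex.I) • (1 : A))
      = x * x + ((t ^ 2 : ℝ) : ℂ) • (1 : A) := by
    rw [hstar, ← hI]
    simp only [add_mul, mul_add, smul_mul_assoc, mul_smul_comm, one_mul, mul_one]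
    module
  calc ‖x + (t * Complex.I) • (1 : A)‖ ^ 2
      = ‖x * x + ((t ^ 2 : ℝ) : ℂ) • (1 : A)‖ := by rw [sq, ← CStarRing.norm_star_mul_self, hmul]
    _ ≤ ‖x * x‖ + ‖((t ^ 2 : ℝ) : ℂ) • (1 : A)‖ := norm_add_le _ _
    _ ≤ ‖x‖ ^ 2 + t ^ 2 := by
      gcongr
      · exact (norm_mul_le x x).trans_eq (sq _).symm
      · rw [norm_smul, CStarRing.norm_one, mul_one, Complex.norm_real, Real.norm_eq_abs, abs_sq]

theorem im_apply_eq_zero_of_isSelfAdjoint {A : Type*} [NormedRing A] [StarRing A] [CStarRing A]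
    [NormedAlgebra ℂ A] [StarModule ℂ A] {ψ : StrongDual ℂ A} (hψ : ‖ψ‖ ≤ 1) (hψ1 : ψ 1 = 1)
    {x : A} (hx : IsSelfAdjoint x) : (ψ x).im = 0 := by
  have hline (t : ℝ) : ((ψ x).im + t) ^ 2 ≤ ‖x‖ ^ 2 + t ^ 2 := by
    have hψt : ψ (x + (t * Complex.I) • (1 : A)) = ψ x + t * Complex.I := by
      simp [hψ1]
    calc ((ψ x).im + t) ^ 2
        = (ψ (x + (t * Complex.I) • (1 : A))).im ^ 2 := by simp [hψt]
      _ ≤ ‖ψ (x + (t * Complex.I) • (1 : A))‖ ^ 2 :=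
        sq_le_sq' (neg_le_of_abs_le (Complex.abs_im_le_norm _)) (Complex.im_le_norm _)
      _ ≤ ‖x + (t * Complex.I) • (1 : A)‖ ^ 2 := by
        gcongr
        simpa using ψ.le_of_opNorm_le hψ (x + (t * Complex.I) • (1 : A))
      _ ≤ ‖x‖ ^ 2 + t ^ 2 := norm_add_mul_I_smul_one_sq_le hx t
  by_contra hne
  -- `hline t` says `2 t Im ψ(x) + (Im ψ(x))² ≤ ‖x‖²`; this `t` makes the first term too large.
  have hlarge : 2 * (ψ x).im * ((‖x‖ ^ 2 + 1) / (2 * (ψ x).im)) = ‖x‖ ^ 2 + 1 := by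
    field_simp
  nlinarith [hline ((‖x‖ ^ 2 + 1) / (2 * (ψ x).im)), sq_nonneg (ψ x).im]

theorem apply_nonneg_of_norm_le_one {A : Type*} [CStarAlgebra A] [PartialOrder A]
    [StarOrderedRing A] {ψ : StrongDual ℂ A} (hψ : ‖ψ‖ ≤ 1) (hψ1 : ψ 1 = 1) {x : A}
    (hx : 0 ≤ x) : 0 ≤ ψ x := by
  have hsa : IsSelfAdjoint x := .of_nonneg hx
  refine Complex.nonneg_iff.2 ⟨?_, (im_apply_eq_zero_of_isSelfAdjoint hψ hψ1 hsa).symm⟩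
  have hnorm : ‖algebraMap ℝ A ‖x‖ - x‖ ≤ ‖x‖ :=
    (CStarAlgebra.norm_le_iff_le_algebraMap _ (norm_nonneg x)
      (sub_nonneg.2 hsa.le_algebraMap_norm_self)).2 (sub_le_self _ hx)
  have hψr : ψ (algebraMap ℝ A ‖x‖) = ‖x‖ := by
    rw [Algebra.algebraMap_eq_smul_one, map_real_smul ψ ψ.continuous, hψ1, Complex.real_smul,
      mul_one]
  have hre : ‖x‖ - (ψ x).re ≤ ‖x‖ :=
    calc ‖x‖ - (ψ x).re = (ψ (algebraMap ℝ A ‖x‖ - x)).re := by simp [hψr]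
      _ ≤ ‖ψ (algebraMap ℝ A ‖x‖ - x)‖ := Complex.re_le_norm _
      _ ≤ 1 * ‖algebraMap ℝ A ‖x‖ - x‖ := ψ.le_of_opNorm_le hψ _
      _ ≤ ‖x‖ := by rwa [one_mul]
  linarith

/-- The state given by a unital contractive functional. -/
noncomputable def CStarState.ofNormLeOne {A : Type*} [CStarAlgebra A] (ψ : StrongDual ℂ A)
    (hψ : ‖ψ‖ ≤ 1) (hψ1 : ψ 1 = 1) : CStarState A where
  toFun := ψ
  map_one := hψ1
  pos a := by
    let _ := CStarAlgebra.spectralOrder A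
    have _ := CStarAlgebra.spectralOrderedRing A
    obtain ⟨hre, him⟩ := Complex.nonneg_iff.1
      (apply_nonneg_of_norm_le_one hψ hψ1 (star_mul_self_nonneg a))
    exact ⟨hre, him.symm⟩

end UnitalContractiveFunctional

theorem exists_ultrafilter_tendsto_apply_of_norm_le {𝕜 E ι : Type*} [NontriviallyNormedField 𝕜]
    [ProperSpace 𝕜] [SeminormedAddCommGroup E] [NormedSpace 𝕜 E] (l : Filter ι) [l.NeBot]
    {f : ι → StrongDual 𝕜 E} {r : ℝ} (hf : ∀ i, ‖f i‖ ≤ r) :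
    ∃ (U : Ultrafilter ι) (ψ : StrongDual 𝕜 E), ↑U ≤ l ∧ ‖ψ‖ ≤ r ∧
      ∀ x, Tendsto (fun i => f i x) U (nhds (ψ x)) := by
  have hball (i : ι) : StrongDual.toWeakDual (f i) ∈
      WeakDual.toStrongDual ⁻¹' Metric.closedBall (0 : StrongDual 𝕜 E) r :=
    mem_closedBall_zero_iff.2 (hf i)
  obtain ⟨ψ, hψ, hcluster⟩ := (WeakDual.isCompact_closedBall 0 r).exists_mapClusterPt
    (tendsto_principal.2 (.of_forall hball) : Tendsto _ l _)
  obtain ⟨U, hU, hlim⟩ := mapClusterPt_iff_ultrafilter.1 hcluster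
  refine ⟨U, WeakDual.toStrongDual ψ, hU, mem_closedBall_zero_iff.1 hψ, fun x => ?_⟩
  exact ((WeakDual.eval_continuous x).tendsto ψ).comp hlim

namespace FusionDatum

variable {I : Type*} (F : FusionDatum I) (S : Finset I) (α γ β : I)

theorem d_pos : 0 < F.d α :=
  one_pos.trans_le (F.one_le_d α)

theorem hasFiniteSupport_N : (F.N α γ).HasFiniteSupport :=
  (F.mul_support_finite α γ).subset fun β hβ =>
    mul_ne_zero (Nat.cast_ne_zero.2 hβ) (F.d_pos β).ne'

theorem hasSum_d_mul_N : HasSum (fun α => F.d α * F.N α γ β) (F.d β * F.d γ) := by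
  have hsupp : (fun α => (F.N β (F.conj γ) α : ℝ) * F.d α).HasFiniteSupport :=
    F.mul_support_finite β (F.conj γ)
  have hsum : HasSum _ _ := (summable_of_hasFiniteSupport hsupp).hasSum
  rw [tsum_eq_finsum hsupp, F.d_mul, F.d_conj] at hsum
  simpa only [F.frobenius₁ _ γ β, mul_comm (F.d _) (Nat.cast _)] using hsum

theorem wcard_coe_finset : F.wcard S = ∑ α ∈ S, F.d α ^ 2 :=
  finsum_mem_coe_finset _ _

variable {S} in
theorem wcard_pos (hS : S.Nonempty) : 0 < F.wcard S := by
  rw [wcard_coe_finset]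
  exact Finset.sum_pos (fun α _ => pow_pos (F.d_pos α) 2) hS

theorem finite_rBoundary : (F.rBoundary γ S).Finite := by
  refine (S.finite_toSet.union
    (S.finite_toSet.biUnion fun β _ => F.hasFiniteSupport_N β (F.conj γ))).subset ?_
  rintro α (⟨hα, -⟩ | ⟨-, β, hβ, hN⟩)
  · exact .inl hα
  · rw [F.frobenius₁] at hN
    exact .inr (Set.mem_biUnion hβ hN.ne')

/-- The coefficient of `β` in the product `(∑_{α ∈ S} d_α α) · γ` in the fusion algebra. -/
noncomputable def mulCoeff : ℝ :=
  ∑ α ∈ S, F.d α * F.N α γ β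

theorem mulCoeff_nonneg : 0 ≤ F.mulCoeff S γ β :=
  Finset.sum_nonneg fun α _ => mul_nonneg (F.d_pos α).le (Nat.cast_nonneg _)

theorem mulCoeff_le : F.mulCoeff S γ β ≤ F.d β * F.d γ :=
  sum_le_hasSum S (fun α _ => mul_nonneg (F.d_pos α).le (Nat.cast_nonneg _))
    (F.hasSum_d_mul_N γ β)

variable {S γ β} in
theorem mulCoeff_eq_of_notMem_rBoundary (hβ : β ∉ F.rBoundary (F.conj γ) S) :
    F.mulCoeff S γ β = (S : Set I).indicator F.d β * F.d γ := by
  simp only [rBoundary, ← F.frobenius₁, Set.mem_ofPred_eq, not_or, not_and, not_exists, not_lt,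
    Nat.le_zero] at hβ
  by_cases hS : β ∈ S
  · have hsum : HasSum (fun α => F.d α * F.N α γ β) (F.mulCoeff S γ β) :=
      hasSum_sum_of_ne_finset_zero fun α hα => by simp [hβ.1 hS α hα]
    rw [hsum.unique (F.hasSum_d_mul_N γ β), Set.indicator_of_mem (Finset.mem_coe.2 hS)]
  · rw [Set.indicator_of_notMem (Finset.mem_coe.not.2 hS), zero_mul]
    exact Finset.sum_eq_zero fun α hα => by simp [hβ.2 hS α hα]

theorem abs_mulCoeff_sub_le :
    |F.mulCoeff S γ β - (S : Set I).indicator F.d β * F.d γ| ≤ F.d β * F.d γ := by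
  refine abs_sub_le_of_nonneg_of_le (F.mulCoeff_nonneg S γ β) (F.mulCoeff_le S γ β)
    (mul_nonneg ?_ (F.d_pos γ).le) (mul_le_mul_of_nonneg_right ?_ (F.d_pos γ).le)
  · exact Set.indicator_nonneg (fun α _ => (F.d_pos α).le) β
  · exact Set.indicator_le_self' (fun α _ => (F.d_pos α).le) β

theorem hasFiniteSupport_mulCoeff : (F.mulCoeff S γ).HasFiniteSupport := by
  refine (S.finite_toSet.biUnion fun α _ => F.hasFiniteSupport_N α γ).subset fun β hβ => ?_
  obtain ⟨α, hα, hN⟩ := Finset.exists_ne_zero_of_sum_ne_zero hβ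
  exact Set.mem_biUnion hα (Nat.cast_ne_zero.1 (right_ne_zero_of_mul hN))

end FusionDatum

namespace CFAAction

variable {I A : Type*} {F : FusionDatum I} [NormedRing A] [StarRing A] [NormedAlgebra ℂ A]
  (act : CFAAction F A) (S : Finset I) (γ : I) (a : A)

theorem sum_smul_T_T :
    ∑ α ∈ S, F.d α • act.T α (act.T γ a) = ∑ᶠ β, F.mulCoeff S γ β • act.T β a := by
  have hfin (α : I) : (fun β => (F.d α * F.N α γ β) • act.T β a).HasFiniteSupport :=
    (F.hasFiniteSupport_N α γ).subset fun β hβ hN => hβ (by simp [hN])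
  simp only [FusionDatum.mulCoeff, Finset.sum_smul]
  rw [finsum_sum_comm _ _ fun α _ => hfin α]
  simp only [mul_smul, Nat.cast_smul_eq_nsmul, ← smul_finsum, act.comp_eq]

theorem sum_smul_T_T_sub :
    ∑ α ∈ S, F.d α • act.T α (act.T γ a) - F.d γ • ∑ α ∈ S, F.d α • act.T α a =
      ∑ β ∈ (F.finite_rBoundary S (F.conj γ)).toFinset,
        (F.mulCoeff S γ β - (S : Set I).indicator F.d β * F.d γ) • act.T β a := by
  have hsupp : (fun β => ((S : Set I).indicator F.d β * F.d γ) • act.T β a).support ⊆ S :=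
    fun β hβ => by
      by_contra hS
      exact hβ (by simp [Set.indicator_of_notMem hS])
  have hsum : F.d γ • ∑ α ∈ S, F.d α • act.T α a =
      ∑ᶠ β, ((S : Set I).indicator F.d β * F.d γ) • act.T β a := by
    rw [finsum_eq_sum_of_support_subset _ hsupp, Finset.smul_sum]
    refine Finset.sum_congr rfl fun β hβ => ?_
    rw [Set.indicator_of_mem (Finset.mem_coe.2 hβ), smul_smul, mul_comm]
  rw [sum_smul_T_T, hsum, ← finsum_sub_distrib
    ((F.hasFiniteSupport_mulCoeff S γ).fun_smul_left _) (S.finite_toSet.subset hsupp)]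
  simp only [← sub_smul]
  refine finsum_eq_sum_of_support_subset_of_finite _ (fun β hβ => ?_) _
  by_contra hboundary
  exact hβ (by simp [F.mulCoeff_eq_of_notMem_rBoundary hboundary])

theorem norm_sum_smul_T_T_sub_le :
    ‖∑ α ∈ S, F.d α • act.T α (act.T γ a) - F.d γ • ∑ α ∈ S, F.d α • act.T α a‖ ≤
      F.d γ * ‖a‖ * F.wcard (F.rBoundary (F.conj γ) S) := by
  rw [sum_smul_T_T_sub, FusionDatum.wcard,
    finsum_mem_eq_finite_toFinset_sum _ (F.finite_rBoundary S (F.conj γ)), Finset.mul_sum]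
  refine norm_sum_le_of_le _ fun β _ => ?_
  calc ‖(F.mulCoeff S γ β - (S : Set I).indicator F.d β * F.d γ) • act.T β a‖
      ≤ (F.d β * F.d γ) * (F.d β * ‖a‖) := by
        rw [norm_smul]
        exact mul_le_mul (F.abs_mulCoeff_sub_le S γ β) (act.norm_le β a) (norm_nonneg _)
          (mul_nonneg (F.d_pos β).le (F.d_pos γ).le)
    _ = F.d γ * ‖a‖ * F.d β ^ 2 := by ring

/-- The Følner average `M_S = |S|_w⁻¹ ∑_{α ∈ S} d_α T_α`: the contractions `d_α⁻¹ T_α` averaged with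
weights `d_α²`. It is zero for empty `S`. -/
noncomputable def folnerMean : A →L[ℂ] A :=
  (F.wcard S)⁻¹ • ∑ α ∈ S, F.d α • (act.T α).mkContinuous (F.d α) (act.norm_le α)

theorem folnerMean_apply :
    act.folnerMean S a = (F.wcard S)⁻¹ • ∑ α ∈ S, F.d α • act.T α a := by
  simp [folnerMean]

variable {S} in
theorem folnerMean_one (hS : S.Nonempty) : act.folnerMean S 1 = 1 := by
  rw [folnerMean_apply, inv_smul_eq_iff₀ (F.wcard_pos hS).ne', F.wcard_coe_finset, Finset.sum_smul]
  refine Finset.sum_congr rfl fun α _ => ?_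
  rw [act.map_one, Complex.coe_smul, smul_smul, sq]

theorem norm_folnerMean_le : ‖act.folnerMean S‖ ≤ 1 := by
  have hsum : ‖∑ α ∈ S, F.d α • (act.T α).mkContinuous (F.d α) (act.norm_le α)‖ ≤ F.wcard S := by
    rw [F.wcard_coe_finset]
    refine norm_sum_le_of_le _ fun α _ => ?_
    rw [norm_smul, Real.norm_of_nonneg (F.d_pos α).le, sq]
    gcongr
    · exact (F.d_pos α).le
    · exact (act.T α).mkContinuous_norm_le (F.d_pos α).le _
  have hwcard : 0 ≤ F.wcard S := (norm_nonneg _).trans hsum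
  rw [folnerMean, norm_smul, norm_inv, Real.norm_of_nonneg hwcard]
  exact inv_mul_le_one_of_le₀ hsum hwcard

theorem norm_folnerMean_T_sub_le :
    ‖act.folnerMean S (act.T γ a) - F.d γ • act.folnerMean S a‖ ≤
      F.d γ * ‖a‖ * (F.wcard (F.rBoundary (F.conj γ) S) / F.wcard S) := by
  have hwcard : 0 ≤ (F.wcard S)⁻¹ := by
    rw [F.wcard_coe_finset]
    positivity
  rw [folnerMean_apply, folnerMean_apply, smul_comm (F.d γ), ← smul_sub, norm_smul,
    Real.norm_of_nonneg hwcard, div_eq_inv_mul, mul_left_comm]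
  gcongr
  exact act.norm_sum_smul_T_T_sub_le S γ a

variable {ι : Type*} {l : Filter ι} {Fn : ι → Finset I}

theorem tendsto_folnerMean_T_sub
    (hFol : Tendsto (fun i => F.wcard (F.rBoundary (F.conj γ) (Fn i)) / F.wcard (Fn i)) l
      (nhds 0)) :
    Tendsto (fun i => act.folnerMean (Fn i) (act.T γ a) - F.d γ • act.folnerMean (Fn i) a) l
      (nhds 0) :=
  squeeze_zero_norm (fun i => act.norm_folnerMean_T_sub_le (Fn i) γ a)
    (by simpa using hFol.const_mul (F.d γ * ‖a‖))

theorem exists_invariant_unital_contraction [NormOneClass A] [l.NeBot]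
    (hne : ∀ i, (Fn i).Nonempty)
    (hFol : ∀ γ, Tendsto (fun i => F.wcard (F.rBoundary γ (Fn i)) / F.wcard (Fn i)) l (nhds 0)) :
    ∃ ψ : StrongDual ℂ A, ‖ψ‖ ≤ 1 ∧ ψ 1 = 1 ∧ ∀ γ a, ψ (act.T γ a) = (F.d γ : ℂ) * ψ a := by
  obtain ⟨φ, hφ, hφ1⟩ : ∃ φ : StrongDual ℂ A, ‖φ‖ ≤ 1 ∧ φ 1 = 1 := by
    simpa using exists_dual_vector'' ℂ (1 : A)
  have hcontr (i : ι) : ‖φ.comp (act.folnerMean (Fn i))‖ ≤ 1 :=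
    (φ.opNorm_comp_le _).trans (mul_le_one₀ hφ (norm_nonneg _) (act.norm_folnerMean_le _))
  obtain ⟨U, ψ, hU, hψ, hlim⟩ := exists_ultrafilter_tendsto_apply_of_norm_le l hcontr
  refine ⟨ψ, hψ, ?_, fun γ a => ?_⟩
  · exact tendsto_nhds_unique (hlim 1) (by simp [act.folnerMean_one (hne _), hφ1])
  · have hdefect : Tendsto (fun i => φ (act.folnerMean (Fn i) (act.T γ a)) -
        F.d γ * φ (act.folnerMean (Fn i) a)) U (nhds 0) := by
      simpa [Function.comp_def, map_real_smul φ φ.continuous] using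
        (φ.continuous.tendsto 0).comp
          ((act.tendsto_folnerMean_T_sub γ a (hFol (F.conj γ))).mono_left hU)
    exact sub_eq_zero.1 (tendsto_nhds_unique ((hlim _).sub ((hlim a).const_mul _)) hdefect)

end CFAAction

theorem stmt5_general {I ι : Type*} (F : FusionDatum I) (l : Filter ι) [l.NeBot]
    (Fn : ι → Finset I) (hne : ∀ i, (Fn i).Nonempty)
    (hFol : ∀ γ : I, Tendsto
      (fun i => F.wcard (F.rBoundary γ (Fn i : Set I)) / F.wcard (Fn i : Set I))
      l (nhds 0))
    {A : Type*} [NormedRing A] [StarRing A] [CStarRing A] [NormedAlgebra ℂ A]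
    [StarModule ℂ A] [CompleteSpace A] [Nontrivial A]
    (act : CFAAction F A) :
    ∃ ψ : CStarState A, ∀ (α : I) (a : A),
      ψ.toFun (act.T α a) = (F.d α : ℂ) * ψ.toFun a := by
  let _ : CStarAlgebra A := {}
  obtain ⟨ψ, hψ, hψ1, hinv⟩ := act.exists_invariant_unital_contraction hne hFol
  exact ⟨.ofNormLeOne ψ hψ hψ1, hinv⟩

/-- if the fusion datum admits a right-Følner sequence of nonempty finite
sets and `(T_α)` is a CFA-type action on a nontrivial unital C*-algebra `A`, then there
is a state `ψ` on `A` with `ψ(T_α a) = d α · ψ(a)` for all `α` and `a`. -/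
theorem stmt5 {I : Type*} [Countable I] (F : FusionDatum I) (Fn : ℕ → Finset I)
    (hne : ∀ n, (Fn n).Nonempty)
    (hFol : ∀ γ : I, Tendsto
      (fun n => F.wcard (F.rBoundary γ (Fn n : Set I)) / F.wcard (Fn n : Set I))
      atTop (nhds 0))
    {A : Type*} [NormedRing A] [StarRing A] [CStarRing A] [NormedAlgebra ℂ A]
    [StarModule ℂ A] [CompleteSpace A] [Nontrivial A]
    (act : CFAAction F A) :
    ∃ ψ : CStarState A, ∀ (α : I) (a : A),
      ψ.toFun (act.T α a) = (F.d α : ℂ) * ψ.toFun a :=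
  stmt5_general F atTop Fn hne hFol act
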